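/- Let k ≥ 2 and s ≥ 1 be integers, and let a, n be positive integers with a dividing n and a ≥ (k−1)s. Then: (i) the set [n] \ {j ∈ [n] : (s+1) divides j} is a transversal of H^n_{a,s}, so T(H^n_{a,s}) ≤ n − ⌊n/(s+1)⌋; and (ii) every transversal T of H^n_{a,s} satisfies |T| ≥ n·(1 − 1/(s+1)) − (k−1)·(n/a)·(H_s − s/(s+1)) − a, where H_s = Σ_{t=1}^{s} 1/t is the s-th harmonic number. -/

import Mathlib

/-- Membership in the family `H^n_{a,s}` (with `k` pairs): `e` consists of `k` pairs
`{i_j, i_j + ℓ}` with `1 ≤ ℓ ≤ s`, where the `j`-th pair lies in the interval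
`I_{b_j} = {(b_j - 1)·(n/a) + 1, …, b_j·(n/a)}` and `b_1 < b_2 < … < b_k` in `[a]`. -/
def HFam (n a s k : ℕ) (e : Finset ℕ) : Prop :=
  ∃ ℓ, 1 ≤ ℓ ∧ ℓ ≤ s ∧
    ∃ i b : Fin k → ℕ,
      StrictMono b ∧ (∀ j, 1 ≤ b j ∧ b j ≤ a) ∧
      (∀ j, (b j - 1) * (n / a) + 1 ≤ i j ∧ i j + ℓ ≤ b j * (n / a)) ∧
      e = Finset.univ.biUnion fun j => {i j, i j + ℓ}

/-- The transversal number of `H^n_{a,s}`. -/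
noncomputable def HTransNum (n a s k : ℕ) : ℕ :=
  sInf {c : ℕ | ∃ S : Finset ℕ, S ⊆ Finset.Icc 1 n ∧
    (∀ e, HFam n a s k e → (S ∩ e).Nonempty) ∧ S.card = c}

/-!
Given a transversal `T`, measure in each interval `I_b` the smallest difference `d_b` of two points
missed by `T`, capped at `s + 1`. The missed points of `I_b` are `d_b`-separated, so there are at
most `(n/a) / d_b + 1` of them. On the other hand, `k` intervals with the same `d_b = t ≤ s` would
contain `k` missed pairs of difference `t`, that is, a member of the family disjoint from `T`; hence
each `t ≤ s` occurs at most `k - 1` times, and all other intervals have `d_b = s + 1`. Summing over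
the intervals bounds the number of missed points.
-/

open Finset

theorem sum_comp_le_mul_sum_of_card_fiber_le {ι κ R : Type*} [DecidableEq κ] [Semiring R]
    [PartialOrder R] [IsOrderedRing R] {B : Finset ι} {J : Finset κ} {d : ι → κ} {g : κ → R} {c : R}
    (hout : ∀ b ∈ B, d b ∉ J → g (d b) ≤ 0) (hnonneg : ∀ t ∈ J, 0 ≤ g t)
    (hcard : ∀ t ∈ J, (#{b ∈ B | d b = t} : R) ≤ c) :
    ∑ b ∈ B, g (d b) ≤ c * ∑ t ∈ J, g t := by
  have hfiber : ∀ t, ∑ b ∈ B with d b = t, g (d b) = #{b ∈ B | d b = t} * g t := fun t => by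
    rw [← nsmul_eq_mul]
    exact sum_eq_card_nsmul fun b hb => by rw [(mem_filter.mp hb).2]
  calc ∑ b ∈ B, g (d b) ≤ ∑ t ∈ J, ∑ b ∈ B with d b = t, g (d b) :=
        sum_le_sum_fiberwise_of_sum_fiber_nonpos fun t ht => sum_nonpos fun b hb => by
          obtain ⟨hbB, rfl⟩ := mem_filter.mp hb
          exact hout b hbB ht
    _ ≤ ∑ t ∈ J, c * g t := sum_le_sum fun t ht => by
        rw [hfiber]
        exact mul_le_mul_of_nonneg_right (hcard t ht) (hnonneg t ht)
    _ = c * ∑ t ∈ J, g t := (mul_sum _ _ _).symm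

theorem card_filter_Icc_one_not_dvd (n d : ℕ) : #{j ∈ Icc 1 n | ¬ d ∣ j} = n - n / d := by
  have hdvd : #{j ∈ Icc 1 n | d ∣ j} = n / d := Nat.Ioc_filter_dvd_card_eq_div n d
  have hsum := card_filter_add_card_filter_not (s := Icc 1 n) (d ∣ ·)
  rw [Nat.card_Icc] at hsum
  omega

theorem card_le_div_add_one_of_separated {V : Finset ℕ} {c m d : ℕ} (hd : 0 < d)
    (hV : V ⊆ Icc c (c + m)) (hsep : ∀ x ∈ V, ∀ y ∈ V, x < y → x + d ≤ y) :
    #V ≤ m / d + 1 := by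
  have hmem : ∀ x ∈ V, c ≤ x ∧ x ≤ c + m := fun x hx => mem_Icc.mp (hV hx)
  have hmono : StrictMonoOn (fun x => (x - c) / d) (V : Set ℕ) := fun x hx y hy hxy =>
    calc (x - c) / d < (x - c + d) / d := by rw [Nat.add_div_right _ hd]; exact Nat.lt_succ_self _
      _ ≤ (y - c) / d := Nat.div_le_div_right (by
        have := hmem x hx
        have := hsep x hx y hy hxy
        omega)
  have hmaps : Set.MapsTo (fun x => (x - c) / d) V (range (m / d + 1)) := fun x hx => by
    have hle : (x - c) / d ≤ m / d := Nat.div_le_div_right (by have := hmem x hx; omega)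
    simpa [Nat.lt_succ_iff] using hle
  simpa using card_le_card_of_injOn _ hmaps hmono.injOn

/-- `T` is a transversal of the family `F`: it meets every member of `F`. Families are encoded as
predicates, to match `HFam`. -/
def IsTransversal {α : Type*} [DecidableEq α] (F : Finset α → Prop) (T : Finset α) : Prop :=
  ∀ e, F e → (T ∩ e).Nonempty

/-- The `b`-th interval `{(b - 1) * m + 1, …, b * m}` of length `m`, where `b` counts from `1`;
for `m = n / a` this is the interval `I_b` of `HFam`. -/
def block (m b : ℕ) : Finset ℕ :=
  Ioc ((b - 1) * m) (b * m)

/-- The smallest positive difference of two elements of `V`, capped at `s + 1`: the value is `s + 1`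
if all positive differences exceed `s`. -/
noncomputable def cappedGap (s : ℕ) (V : Finset ℕ) : ℕ :=
  sInf (insert (s + 1) {d | 0 < d ∧ ∃ x ∈ V, x + d ∈ V})

section CappedGap

variable (s : ℕ) (V : Finset ℕ)

theorem cappedGap_eq_or_exists_add_mem :
    cappedGap s V = s + 1 ∨ 0 < cappedGap s V ∧ ∃ x ∈ V, x + cappedGap s V ∈ V :=
  Nat.sInf_mem (Set.insert_nonempty _ _)

theorem cappedGap_pos : 0 < cappedGap s V := by
  have := cappedGap_eq_or_exists_add_mem s V
  omega

theorem cappedGap_le : cappedGap s V ≤ s + 1 :=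
  Nat.sInf_le (Set.mem_insert _ _)

variable {s V}

theorem exists_add_cappedGap_mem (h : cappedGap s V ≤ s) : ∃ x ∈ V, x + cappedGap s V ∈ V :=
  ((cappedGap_eq_or_exists_add_mem s V).resolve_left (by omega)).2

theorem add_cappedGap_le {x y : ℕ} (hx : x ∈ V) (hy : y ∈ V) (hxy : x < y) :
    x + cappedGap s V ≤ y := by
  have hgap : cappedGap s V ≤ y - x :=
    Nat.sInf_le (.inr ⟨by omega, x, hx, by rwa [Nat.add_sub_cancel' hxy.le]⟩)
  omega

end CappedGap

theorem card_le_div_cappedGap_add_one (s : ℕ) {V : Finset ℕ} {c m : ℕ}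
    (hV : V ⊆ Icc c (c + m)) : #V ≤ m / cappedGap s V + 1 :=
  card_le_div_add_one_of_separated (cappedGap_pos s V) hV fun _ hx _ hy => add_cappedGap_le hx hy

theorem block_subset_Icc (m b : ℕ) : block m b ⊆ Icc ((b - 1) * m) ((b - 1) * m + m) := by
  have hb : b * m ≤ (b - 1) * m + m :=
    (Nat.mul_le_mul_right m (by omega : b ≤ b - 1 + 1)).trans_eq (Nat.succ_mul _ _)
  exact Ioc_subset_Icc_self.trans (Icc_subset_Icc_right hb)

theorem Icc_one_mul_subset_biUnion_block (a m : ℕ) :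
    Icc 1 (a * m) ⊆ (Icc 1 a).biUnion (block m) := by
  intro x hx
  have hunion := Monotone.biUnion_Ico_Ioc_map_succ (f := fun i => i * m)
    (fun _ _ h => Nat.mul_le_mul_right m h) 0 a
  have hx' : x ∈ Set.Ioc (0 * m) (a * m) := by
    simpa [Nat.succ_le_iff] using hx
  rw [← hunion] at hx'
  simp only [Set.mem_iUnion, Set.mem_Ico] at hx'
  obtain ⟨i, hi, hxi⟩ := hx'
  exact mem_biUnion.mpr ⟨i + 1, mem_Icc.mpr (by omega), mem_Ioc.mpr hxi⟩

theorem card_Icc_sdiff_le_sum_card_block_sdiff (a m : ℕ) (T : Finset ℕ) :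
    #(Icc 1 (a * m) \ T) ≤ ∑ b ∈ Icc 1 a, #(block m b \ T) :=
  calc #(Icc 1 (a * m) \ T) ≤ #((Icc 1 a).biUnion fun b => block m b \ T) := by
        have hsdiff : (Icc 1 a).biUnion (fun b => block m b \ T) =
            (Icc 1 a).biUnion (block m) \ T := by grind
        rw [hsdiff]
        exact card_le_card (sdiff_subset_sdiff (Icc_one_mul_subset_biUnion_block a m) le_rfl)
    _ ≤ _ := card_biUnion_le

section HFam

variable {n a s k : ℕ}

theorem HFam.exists_pair_mem {e : Finset ℕ} (he : HFam n a s k e) (hk : 0 < k) :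
    ∃ i ℓ, 0 < ℓ ∧ ℓ ≤ s ∧ i ∈ Icc 1 n ∧ i + ℓ ∈ Icc 1 n ∧ i ∈ e ∧ i + ℓ ∈ e := by
  obtain ⟨ℓ, hℓ, hℓs, i, b, -, hb, hi, rfl⟩ := he
  have hbn : b ⟨0, hk⟩ * (n / a) ≤ n :=
    (Nat.mul_le_mul_right _ (hb _).2).trans (Nat.mul_div_le n a)
  have hi₀ := hi ⟨0, hk⟩
  refine ⟨i ⟨0, hk⟩, ℓ, hℓ, hℓs, mem_Icc.mpr (by omega), mem_Icc.mpr (by omega), ?_, ?_⟩ <;>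
    exact mem_biUnion.mpr ⟨⟨0, hk⟩, mem_univ _, by simp⟩

theorem isTransversal_filter_not_dvd (hk : 0 < k) :
    IsTransversal (HFam n a s k) {j ∈ Icc 1 n | ¬ (s + 1) ∣ j} := by
  intro e he
  obtain ⟨i, ℓ, hℓ, hℓs, hi, hiℓ, hie, hiℓe⟩ := he.exists_pair_mem hk
  by_cases hdvd : (s + 1) ∣ i
  · have hndvd : ¬ (s + 1) ∣ i + ℓ := fun h =>
      Nat.not_dvd_of_pos_of_lt hℓ (Nat.lt_succ_of_le hℓs) ((Nat.dvd_add_right hdvd).mp h)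
    exact ⟨i + ℓ, mem_inter.mpr ⟨mem_filter.mpr ⟨hiℓ, hndvd⟩, hiℓe⟩⟩
  · exact ⟨i, mem_inter.mpr ⟨mem_filter.mpr ⟨hi, hdvd⟩, hie⟩⟩

theorem hTransNum_le (hk : 0 < k) : HTransNum n a s k ≤ n - n / (s + 1) :=
  Nat.sInf_le ⟨_, filter_subset _ _, isTransversal_filter_not_dvd hk,
    card_filter_Icc_one_not_dvd n (s + 1)⟩

namespace IsTransversal

variable {T : Finset ℕ}

theorem card_blocks_missed_pair_lt (hT : IsTransversal (HFam n a s k) T) {t : ℕ} (ht : 0 < t)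
    (hts : t ≤ s) :
    #{b ∈ Icc 1 a | ∃ x ∈ block (n / a) b \ T, x + t ∈ block (n / a) b \ T} < k := by
  by_contra! hcard
  obtain ⟨C, hC, hCk⟩ := exists_subset_card_eq hcard
  have hmem := fun j => mem_filter.mp (hC (C.orderEmbOfFin_mem hCk j))
  simp only [mem_Icc, mem_sdiff, block, mem_Ioc] at hmem
  choose hb i hi hit using hmem
  have hfam : HFam n a s k (univ.biUnion fun j => {i j, i j + t}) :=
    ⟨t, ht, hts, i, C.orderEmbOfFin hCk, (C.orderEmbOfFin hCk).strictMono, hb,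
      fun j => ⟨(hi j).1.1, (hit j).1.2⟩, rfl⟩
  obtain ⟨x, hx⟩ := hT _ hfam
  obtain ⟨hxT, j, -, hxj⟩ := by simpa only [mem_inter, mem_biUnion] using hx
  obtain rfl | rfl : x = i j ∨ x = i j + t := by simpa using hxj
  exacts [(hi j).2 hxT, (hit j).2 hxT]

theorem card_blocks_cappedGap_eq_lt (hT : IsTransversal (HFam n a s k) T) {t : ℕ} (ht : 0 < t)
    (hts : t ≤ s) : #{b ∈ Icc 1 a | cappedGap s (block (n / a) b \ T) = t} < k := by
  refine (card_le_card (monotone_filter_right _ ?_)).trans_lt (hT.card_blocks_missed_pair_lt ht hts)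
  rintro b - rfl
  exact exists_add_cappedGap_mem hts

theorem sum_one_div_cappedGap_sub_le (hT : IsTransversal (HFam n a s k) T) :
    ∑ b ∈ Icc 1 a, (1 / (cappedGap s (block (n / a) b \ T) : ℝ) - 1 / ((s : ℝ) + 1)) ≤
      ((k : ℝ) - 1) * ∑ t ∈ Icc 1 s, (1 / (t : ℝ) - 1 / ((s : ℝ) + 1)) := by
  refine sum_comp_le_mul_sum_of_card_fiber_le (g := fun t : ℕ => 1 / (t : ℝ) - 1 / ((s : ℝ) + 1))
    (fun b _ hgap => ?_) (fun t ht => ?_) (fun t ht => ?_)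
  · have hcap : cappedGap s (block (n / a) b \ T) = s + 1 := by
      have := cappedGap_pos s (block (n / a) b \ T)
      have := cappedGap_le s (block (n / a) b \ T)
      rw [mem_Icc] at hgap
      omega
    simp [hcap]
  · obtain ⟨ht, hts⟩ := mem_Icc.mp ht
    exact sub_nonneg.mpr (one_div_le_one_div_of_le (by exact_mod_cast ht)
      (by exact_mod_cast hts.trans s.le_succ))
  · obtain ⟨ht, hts⟩ := mem_Icc.mp ht
    rw [le_sub_iff_add_le]
    exact_mod_cast hT.card_blocks_cappedGap_eq_lt ht hts

theorem card_Icc_sdiff_le (hT : IsTransversal (HFam n a s k) T) (hdvd : a ∣ n) :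
    (#(Icc 1 n \ T) : ℝ) ≤
      (n / a : ℝ) * (((k : ℝ) - 1) * ∑ t ∈ Icc 1 s, (1 / (t : ℝ) - 1 / ((s : ℝ) + 1))) +
        n * (1 / ((s : ℝ) + 1)) + a := by
  set m := n / a
  have hnm : a * m = n := Nat.mul_div_cancel' hdvd
  set d : ℕ → ℕ := fun b => cappedGap s (block m b \ T)
  have hblock : ∀ b, (#(block m b \ T) : ℝ) ≤ m * (1 / (d b : ℝ)) + 1 := fun b => by
    have hcard : #(block m b \ T) ≤ m / d b + 1 :=
      card_le_div_cappedGap_add_one s (sdiff_subset.trans (block_subset_Icc m b))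
    calc (#(block m b \ T) : ℝ) ≤ (m / d b : ℕ) + 1 := by exact_mod_cast hcard
      _ ≤ m * (1 / (d b : ℝ)) + 1 := by
        rw [mul_one_div]
        gcongr
        exact Nat.cast_div_le
  calc (#(Icc 1 n \ T) : ℝ) ≤ ∑ b ∈ Icc 1 a, (#(block m b \ T) : ℝ) := by
        rw [← hnm]
        exact_mod_cast card_Icc_sdiff_le_sum_card_block_sdiff a m T
    _ ≤ ∑ b ∈ Icc 1 a, (m * (1 / (d b : ℝ)) + 1) := sum_le_sum fun b _ => hblock b
    _ = m * ∑ b ∈ Icc 1 a, (1 / (d b : ℝ) - 1 / ((s : ℝ) + 1)) + n * (1 / ((s : ℝ) + 1)) + a := by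
        rw [← hnm, sum_add_distrib, sum_sub_distrib, ← mul_sum]
        simp only [sum_const, Nat.card_Icc, Nat.add_sub_cancel, nsmul_eq_mul, Nat.cast_mul]
        ring
    _ ≤ _ := by
        rw [← Nat.cast_div_charZero hdvd]
        gcongr
        exact hT.sum_one_div_cappedGap_sub_le

theorem le_card (hT : IsTransversal (HFam n a s k) T) (hdvd : a ∣ n) :
    (n : ℝ) * (1 - 1 / ((s : ℝ) + 1)) -
        ((k : ℝ) - 1) * ((n : ℝ) / (a : ℝ)) *
          ((∑ t ∈ Icc 1 s, (1 : ℝ) / (t : ℝ)) - (s : ℝ) / ((s : ℝ) + 1)) -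
        (a : ℝ) ≤ #T := by
  have hn : (n : ℝ) ≤ #(Icc 1 n \ T) + #T := by
    exact_mod_cast (Nat.card_Icc 1 n).ge.trans card_le_card_sdiff_add_card
  have hsum : ∑ t ∈ Icc 1 s, (1 / (t : ℝ) - 1 / ((s : ℝ) + 1)) =
      (∑ t ∈ Icc 1 s, (1 : ℝ) / (t : ℝ)) - (s : ℝ) / ((s : ℝ) + 1) := by
    simp [sum_sub_distrib, div_eq_mul_inv]
  have hmissed := hT.card_Icc_sdiff_le hdvd
  rw [hsum] at hmissed
  linarith

end IsTransversal

end HFam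

theorem stmt_8_general {k s a n : ℕ} (hk : 0 < k) (_ha : 0 < a) (hdvd : a ∣ n) :
    IsTransversal (HFam n a s k) {j ∈ Icc 1 n | ¬ (s + 1) ∣ j} ∧
    HTransNum n a s k ≤ n - n / (s + 1) ∧
    ∀ T : Finset ℕ, IsTransversal (HFam n a s k) T →
      (n : ℝ) * (1 - 1 / ((s : ℝ) + 1)) -
        ((k : ℝ) - 1) * ((n : ℝ) / (a : ℝ)) *
          ((∑ t ∈ Icc 1 s, (1 : ℝ) / (t : ℝ)) - (s : ℝ) / ((s : ℝ) + 1)) -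
        (a : ℝ) ≤ #T :=
  ⟨isTransversal_filter_not_dvd hk, hTransNum_le hk, fun _ hT => hT.le_card hdvd⟩

theorem stmt_8 (k s a n : ℕ) (hk : 2 ≤ k) (hs : 1 ≤ s) (ha : 0 < a) (hn : 0 < n)
    (hdvd : a ∣ n) (haks : (k - 1) * s ≤ a) :
    (∀ e, HFam n a s k e →
      ((((Finset.Icc 1 n).filter fun j => ¬ (s + 1) ∣ j)) ∩ e).Nonempty) ∧
    HTransNum n a s k ≤ n - n / (s + 1) ∧
    (∀ T : Finset ℕ, T ⊆ Finset.Icc 1 n →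
      (∀ e, HFam n a s k e → (T ∩ e).Nonempty) →
      (n : ℝ) * (1 - 1 / ((s : ℝ) + 1)) -
        ((k : ℝ) - 1) * ((n : ℝ) / (a : ℝ)) *
          ((∑ t ∈ Finset.Icc 1 s, (1 : ℝ) / (t : ℝ)) - (s : ℝ) / ((s : ℝ) + 1)) -
        (a : ℝ) ≤ (T.card : ℝ)) := by
  obtain ⟨htrans, hnum, hcard⟩ := stmt_8_general (s := s) (by omega : 0 < k) ha hdvd
  exact ⟨htrans, hnum, fun T _ => hcard T⟩
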